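/- Let I be the basic PLP-polymatroidal ideal of type (0, b | α, β) in S = K[x₁,…,x_n]. Then for every integer k ≥ n − 1 one has (I^{k+1} : 𝔪) = I^{k+1} + I·(I^k : 𝔪). (This expresses that the socle module Soc*(I) = ⊕_{m≥1} soc(Iᵐ) is generated over the Rees ring in degrees < n, and likewise Soc(I) is generated in degrees < n.) -/

import Mathlib

lemma PLP_tel (f g : ℕ → ℤ) (i j : ℕ) (hij : i ≤ j)
    (h : ∀ t, i ≤ t → t < j → f (t+1) - f t ≤ g (t+1) - g t) : f j - f i ≤ g j - g i := by
  induction j, hij using Nat.le_induction with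
  | base => simp
  | succ j hj ih =>
    have h1 := ih (fun t h1 h2 => h t h1 (by omega))
    have h2 := h j hj (by omega)
    linarith

def PLP_lo (L Λ : ℕ → ℤ) : ℕ → ℤ
  | 0 => L 0
  | (m+1) => max (L (m+1)) (PLP_lo L Λ m + (Λ (m+1) - Λ m))

def PLP_hi (U H : ℕ → ℤ) : ℕ → ℤ
  | 0 => U 0
  | (m+1) => min (U (m+1)) (PLP_hi U H m + (H (m+1) - H m))

lemma PLP_lo_eq (L Λ : ℕ → ℤ) (m : ℕ) : ∃ i ≤ m, PLP_lo L Λ m = L i + (Λ m - Λ i) := by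
  induction m with
  | zero => exact ⟨0, le_rfl, by simp [PLP_lo]⟩
  | succ m ih =>
    obtain ⟨i, hi, h⟩ := ih
    rcases max_choice (L (m+1)) (PLP_lo L Λ m + (Λ (m+1) - Λ m)) with h' | h'
    · exact ⟨m+1, le_rfl, by simp [PLP_lo, h']⟩
    · exact ⟨i, by omega, by rw [PLP_lo, h', h]; ring⟩

lemma PLP_hi_eq (U H : ℕ → ℤ) (m : ℕ) : ∃ i ≤ m, PLP_hi U H m = U i + (H m - H i) := by
  induction m with
  | zero => exact ⟨0, le_rfl, by simp [PLP_hi]⟩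
  | succ m ih =>
    obtain ⟨i, hi, h⟩ := ih
    rcases min_choice (U (m+1)) (PLP_hi U H m + (H (m+1) - H m)) with h' | h'
    · exact ⟨m+1, le_rfl, by simp [PLP_hi, h']⟩
    · exact ⟨i, by omega, by rw [PLP_hi, h', h]; ring⟩

/-- Feasibility of a system of difference constraints along a path. -/
lemma PLP_feas (n : ℕ) (L U Λ H : ℕ → ℤ)
    (hΛH : ∀ t < n, Λ (t+1) - Λ t ≤ H (t+1) - H t)
    (hA : ∀ i j, i ≤ j → j ≤ n → L j - U i ≤ H j - H i)
    (hB : ∀ i j, i ≤ j → j ≤ n → Λ j - Λ i ≤ U j - L i) :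
    ∃ σ : ℕ → ℤ, (∀ i ≤ n, L i ≤ σ i ∧ σ i ≤ U i) ∧
      ∀ t < n, Λ (t+1) - Λ t ≤ σ (t+1) - σ t ∧ σ (t+1) - σ t ≤ H (t+1) - H t := by
  have hlohi : ∀ m ≤ n, PLP_lo L Λ m ≤ PLP_hi U H m := by
    intro m hm
    obtain ⟨i, hi, h1⟩ := PLP_lo_eq L Λ m
    obtain ⟨j, hj, h2⟩ := PLP_hi_eq U H m
    rw [h1, h2]
    rcases le_total i j with hij | hij
    · have := hB i j hij (by omega)
      have := PLP_tel Λ H j m hj (fun t _ h => hΛH t (by omega))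
      linarith
    · have := hA j i hij (by omega)
      have := PLP_tel Λ H i m hi (fun t _ h => hΛH t (by omega))
      linarith
  have key : ∀ m ≤ n, ∀ x, PLP_lo L Λ m ≤ x → x ≤ PLP_hi U H m →
      ∃ σ : ℕ → ℤ, σ m = x ∧ (∀ i ≤ m, L i ≤ σ i ∧ σ i ≤ U i) ∧
      ∀ t < m, Λ (t+1) - Λ t ≤ σ (t+1) - σ t ∧ σ (t+1) - σ t ≤ H (t+1) - H t := by
    intro m
    induction m with
    | zero =>
      intro _ x h1 h2
      refine ⟨fun _ => x, rfl, ?_, by simp⟩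
      intro i hi
      obtain rfl : i = 0 := by omega
      exact ⟨h1, h2⟩
    | succ m ih =>
      intro hm x h1 h2
      rw [PLP_lo, max_le_iff] at h1
      rw [PLP_hi, le_min_iff] at h2
      have h3 := hlohi m (by omega)
      have h4 := hΛH m (by omega)
      obtain ⟨σ, hx, ha, hb⟩ := ih (by omega) (max (PLP_lo L Λ m) (x - (H (m+1) - H m)))
        (le_max_left _ _) (max_le h3 (by linarith))
      have hy1 : x - (H (m+1) - H m) ≤ σ m := by rw [hx]; exact le_max_right _ _
      have hy2 : σ m ≤ x - (Λ (m+1) - Λ m) := by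
        rw [hx]; exact max_le (by linarith) (by linarith)
      refine ⟨fun i => if i = m + 1 then x else σ i, by simp, ?_, ?_⟩
      · intro i hi
        by_cases h : i = m + 1
        · subst h; simp only [if_true]; exact ⟨h1.1, h2.1⟩
        · simp only [h, if_false]; exact ha i (by omega)
      · intro t ht
        have ht' : t ≠ m + 1 := by omega
        by_cases h : t = m
        · subst h
          simp only [if_true, ht', if_false]
          constructor <;> linarith
        · have : t + 1 ≠ m + 1 := by omega
          simp only [this, ht', if_false]
          exact hb t (by omega)
  obtain ⟨σ, -, h⟩ := key n le_rfl _ le_rfl (hlohi n le_rfl)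
  exact ⟨σ, h⟩

def PLP_PP (n : ℕ) (A B b : ℕ → ℤ) (k : ℤ) (σ : ℕ → ℤ) : Prop :=
  σ 0 = 0 ∧ (∀ i ≤ n, k * A i ≤ σ i ∧ σ i ≤ k * B i) ∧
    ∀ t < n, 0 ≤ σ (t+1) - σ t ∧ σ (t+1) - σ t ≤ k * b t

lemma PLP_decomp (n : ℕ) (A B b : ℕ → ℤ) (hA0 : A 0 = 0) (hB0 : B 0 = 0) (k : ℕ) (s : ℕ → ℤ)
    (hs : PLP_PP n A B b (k+1) s) :
    ∃ τ, PLP_PP n A B b 1 τ ∧ PLP_PP n A B b k (s - τ) := by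
  obtain ⟨hs0, hs1, hs2⟩ := hs
  have hk : (0:ℤ) ≤ k := by positivity
  let l : ℕ → ℤ := fun t => max 0 (s (t+1) - s t - k * b t)
  let h : ℕ → ℤ := fun t => min (b t) (s (t+1) - s t)
  let Λ : ℕ → ℤ := fun i => ∑ t ∈ Finset.range i, l t
  let H : ℕ → ℤ := fun i => ∑ t ∈ Finset.range i, h t
  let L : ℕ → ℤ := fun i => max (A i) (s i - k * B i)
  let U : ℕ → ℤ := fun i => min (B i) (s i - k * A i)
  have hΛ : ∀ t, Λ (t+1) - Λ t = l t := fun t => by simp [Λ, Finset.sum_range_succ]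
  have hH : ∀ t, H (t+1) - H t = h t := fun t => by simp [H, Finset.sum_range_succ]
  have hLs : ∀ i ≤ n, (k+1) * L i ≤ s i := by
    intro i hi
    obtain ⟨h1, h2⟩ := hs1 i hi
    rcases max_choice (A i) (s i - k * B i) with h' | h' <;> simp only [L, h'] <;> nlinarith
  have hUs : ∀ i ≤ n, s i ≤ (k+1) * U i := by
    intro i hi
    obtain ⟨h1, h2⟩ := hs1 i hi
    rcases min_choice (B i) (s i - k * A i) with h' | h' <;> simp only [U, h'] <;> nlinarith
  have hls : ∀ i < n, (k+1) * l i ≤ s (i+1) - s i := by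
    intro i hi
    obtain ⟨h1, h2⟩ := hs2 i hi
    rcases max_choice 0 (s (i+1) - s i - k * b i) with h' | h' <;> simp only [l, h'] <;> nlinarith
  have hhs : ∀ i < n, s (i+1) - s i ≤ (k+1) * h i := by
    intro i hi
    obtain ⟨h1, h2⟩ := hs2 i hi
    rcases min_choice (b i) (s (i+1) - s i) with h' | h' <;> simp only [h, h'] <;> nlinarith
  have hΛs : ∀ i j, i ≤ j → j ≤ n → (k+1) * (Λ j - Λ i) ≤ s j - s i := by
    intro i j hij hj
    have := PLP_tel (fun i => (k+1) * Λ i) s i j hij (fun t _ ht => by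
      have := hls t (by omega)
      rw [← hΛ] at this; linarith)
    linarith
  have hHs : ∀ i j, i ≤ j → j ≤ n → s j - s i ≤ (k+1) * (H j - H i) := by
    intro i j hij hj
    have := PLP_tel s (fun i => (k+1) * H i) i j hij (fun t _ ht => by
      have := hhs t (by omega)
      rw [← hH] at this; linarith)
    linarith
  have hk1 : (0:ℤ) < k + 1 := by positivity
  obtain ⟨τ, h1, h2⟩ := PLP_feas n L U Λ H
    (by
      intro t ht
      rw [hΛ, hH]
      have := hls t ht
      have := hhs t ht
      exact le_of_mul_le_mul_left (by linarith) hk1)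
    (by
      intro i j hij hj
      have := hHs i j hij hj
      have := hLs j hj
      have := hUs i (by omega)
      exact le_of_mul_le_mul_left (by linarith) hk1)
    (by
      intro i j hij hj
      have := hΛs i j hij hj
      have := hLs i (by omega)
      have := hUs j hj
      exact le_of_mul_le_mul_left (by linarith) hk1)
  simp only [hΛ, hH, L, U, l, h, max_le_iff, le_min_iff] at h1 h2
  have h00 := h1 0 (by omega)
  simp only [hA0, hB0] at h00
  refine ⟨τ, ⟨by omega, ?_, ?_⟩, ⟨?_, ?_, ?_⟩⟩
  · intro i hi; have := h1 i hi; constructor <;> linarith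
  · intro i hi; have := h2 i hi; constructor <;> linarith
  · simp only [Pi.sub_apply]; omega
  · intro i hi; have := h1 i hi; simp only [Pi.sub_apply]; constructor <;> linarith
  · intro i hi; have := h2 i hi; simp only [Pi.sub_apply]; constructor <;> linarith

def PLP_st (t i : ℕ) : ℤ := if t < i then 1 else 0

set_option maxHeartbeats 2000000 in
lemma PLP_soc (n : ℕ) (A B b : ℕ → ℤ) (hA0 : A 0 = 0) (hB0 : B 0 = 0) (hAB : A n = B n)
    (hn : 2 ≤ n) (k : ℕ) (hk : n - 1 ≤ k) (s : ℕ → ℤ)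
    (hs0 : s 0 = 0) (hsm : ∀ t < n, s t ≤ s (t+1))
    (hs : ∀ t < n, PLP_PP n A B b (k+1) (s + PLP_st t)) :
    ∃ τ, PLP_PP n A B b 1 τ ∧ (∀ t < n, τ (t+1) - τ t ≤ s (t+1) - s t) ∧
      ∀ t < n, PLP_PP n A B b k (s - τ + PLP_st t) := by
  have hk0 : (1:ℤ) ≤ k := by exact_mod_cast (by omega : 1 ≤ k)
  have hkn : (n:ℤ) ≤ k + 1 := by exact_mod_cast (by omega : n ≤ k + 1)
  have hk1 : (0:ℤ) < k + 1 := by positivity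
  have hsA : ∀ i < n, (k+1) * A i ≤ s i := by
    intro i hi
    have := ((hs (n-1) (by omega)).2.1 i (by omega)).1
    have h' : ¬ (n - 1 < i) := by omega
    simpa [PLP_st, h'] using this
  have hsB : ∀ i ≤ n, 0 < i → s i + 1 ≤ (k+1) * B i := by
    intro i hi hi0
    have := ((hs 0 (by omega)).2.1 i (by omega)).2
    simpa [PLP_st, hi0] using this
  have hsn : s n + 1 = (k+1) * A n := by
    have := ((hs 0 (by omega)).2.1 n le_rfl)
    have h' : 0 < n := by omega
    simp [PLP_st, h'] at this
    rw [← hAB] at this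
    linarith
  have hsb : ∀ t < n, s (t+1) - s t + 1 ≤ (k+1) * b t := by
    intro t ht
    have := ((hs t ht).2.2 t ht).2
    simp [PLP_st] at this
    linarith
  let l : ℕ → ℤ := fun t => max 0 (s (t+1) - s t - k * b t + 1)
  let h : ℕ → ℤ := fun t => min (b t) (s (t+1) - s t)
  let Λ : ℕ → ℤ := fun i => ∑ t ∈ Finset.range i, l t
  let H : ℕ → ℤ := fun i => ∑ t ∈ Finset.range i, h t
  let L : ℕ → ℤ := fun i => if i = 0 then 0 else max (A i) (s i - k * B i + 1)
  let U : ℕ → ℤ := fun i => if i = n then B n else min (B i) (s i - k * A i)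
  have hΛ : ∀ t, Λ (t+1) - Λ t = l t := fun t => by simp [Λ, Finset.sum_range_succ]
  have hH : ∀ t, H (t+1) - H t = h t := fun t => by simp [H, Finset.sum_range_succ]
  have hL0 : L 0 = 0 := by simp [L]
  have hUn : U n = B n := by simp [U]
  have hLs : ∀ i ≤ n, (k+1) * L i ≤ s i + 1 := by
    intro i hi
    by_cases hi0 : i = 0
    · subst hi0; rw [hL0, hs0]; norm_num
    simp only [L, hi0, if_false]
    have h1 : (k+1) * A i ≤ s i + 1 := by
      by_cases hin : i = n
      · subst hin; exact hsn.ge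
      · have := hsA i (by omega); linarith
    have h2 := hsB i hi (by omega)
    rcases max_choice (A i) (s i - k * B i + 1) with h' | h' <;> simp only [h'] <;> nlinarith
  have hUs : ∀ i ≤ n, s i ≤ (k+1) * U i := by
    intro i hi
    by_cases hin : i = n
    · subst hin; rw [hUn, ← hAB]; linarith
    simp only [U, hin, if_false]
    have h1 := hsA i (by omega)
    have h2 : s i ≤ (k+1) * B i := by
      by_cases hi0 : i = 0
      · subst hi0; rw [hs0, hB0]; simp
      · have := hsB i hi (by omega); linarith
    rcases min_choice (B i) (s i - k * A i) with h' | h' <;> simp only [h'] <;> nlinarith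
  have hls : ∀ i < n, (k+1) * l i ≤ s (i+1) - s i + 1 := by
    intro i hi
    have h1 := hsb i hi
    have h2 := hsm i hi
    rcases max_choice 0 (s (i+1) - s i - k * b i + 1) with h' | h' <;> simp only [l, h'] <;>
      nlinarith
  have hb1 : ∀ i < n, 1 ≤ b i := by
    intro i hi
    have h1 := hsb i hi
    have h2 := hsm i hi
    by_contra hcon
    have : b i ≤ 0 := by omega
    nlinarith
  have hh0 : ∀ i < n, 0 ≤ h i := by
    intro i hi
    have := hb1 i hi
    exact le_min (by linarith) (by linarith [hsm i hi])
  have hhs : ∀ i < n, s (i+1) - s i ≤ (k+1) * h i ∧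
      (s i < s (i+1) → s (i+1) - s i + 1 ≤ (k+1) * h i) := by
    intro i hi
    have h1 := hsb i hi
    have h2 := hsm i hi
    rcases min_choice (b i) (s (i+1) - s i) with h' | h' <;> simp only [h, h']
    · exact ⟨by linarith, fun _ => by linarith⟩
    · exact ⟨by nlinarith, fun _ => by nlinarith⟩
  have hΛs : ∀ i j, i ≤ j → j ≤ n → (k+1) * (Λ j - Λ i) ≤ s j - s i + (j - i) := by
    intro i j hij hj
    have := PLP_tel (fun i => (k+1) * Λ i) (fun i => s i + (i:ℤ)) i j hij (fun t _ ht => by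
      have := hls t (by omega)
      rw [← hΛ] at this; push_cast; linarith)
    linarith
  have hHs : ∀ i j, i ≤ j → j ≤ n → (s j = s i ∧ 0 ≤ H j - H i) ∨
      s j - s i + 1 ≤ (k+1) * (H j - H i) := by
    intro i j hij
    induction j, hij using Nat.le_induction with
    | base => intro _; left; simp
    | succ j hj ih =>
      intro hjn
      have h1 := hhs j (by omega)
      have h2 := hsm j (by omega)
      have h3 := hh0 j (by omega)
      have h4 := hH j
      rw [← h4] at h1 h3
      rcases ih (by omega) with ⟨h5, h6⟩ | h5
      · rcases h2.eq_or_lt with h7 | h7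
        · left; constructor <;> linarith
        · right; have := h1.2 h7; nlinarith
      · right; nlinarith [h1.1]
  obtain ⟨τ, h1, h2⟩ := PLP_feas n L U Λ H
    (by
      intro t ht
      rw [hΛ, hH]
      have h1 := hsb t ht
      have h2 := hsm t ht
      have h3 := hb1 t ht
      refine max_le (hh0 t ht) (le_min (by linarith) (by nlinarith)))
    (by
      intro i j hij hj
      have h2 := hLs j hj
      have h3 := hUs i (by omega)
      rcases hHs i j hij hj with ⟨h4, h5⟩ | h4
      · have : L j - U i ≤ 0 := by
          by_contra hcon
          have : 1 ≤ L j - U i := by omega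
          nlinarith
        linarith
      · exact le_of_mul_le_mul_left (by linarith) hk1)
    (by
      intro i j hij hj
      have h1 := hΛs i j hij hj
      have h2 := hLs i (by omega)
      have h3 := hUs j hj
      have hjn : (j:ℤ) ≤ n := by exact_mod_cast hj
      have h4 : (k+1) * (Λ j - Λ i - (U j - L i)) < k + 1 := by
        have hi0 : (0:ℤ) ≤ i := by positivity
        by_cases hi : i = 0
        · rw [hi] at h1 ⊢
          rw [hL0]
          by_cases hjn' : j = n
          · rw [hjn'] at h1 ⊢
            rw [hUn, ← hAB]
            push_cast at h1
            linarith
          · have : (j:ℤ) + 1 ≤ n := by exact_mod_cast (by omega : j + 1 ≤ n)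
            push_cast at h1
            rw [hs0] at h1
            linarith
        · have hi1 : (1:ℤ) ≤ i := by exact_mod_cast (by omega : 1 ≤ i)
          by_cases hjn' : j = n
          · rw [hjn'] at h1 ⊢
            rw [hUn, ← hAB]
            linarith
          · have : (j:ℤ) + 1 ≤ n := by exact_mod_cast (by omega : j + 1 ≤ n)
            linarith
      by_contra hcon
      have : 1 ≤ Λ j - Λ i - (U j - L i) := by omega
      nlinarith)
  simp only [hΛ, hH, l, h, max_le_iff, le_min_iff] at h2
  have h00 := h1 0 (by omega)
  have hn0 : ¬ (0 = n) := by omega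
  simp only [L, U, if_true, hn0, if_false, hA0, hB0, hs0] at h00
  simp only [le_min_iff] at h00
  have hτ0 : τ 0 = 0 := by omega
  have hτn : τ n = A n := by
    have := h1 n le_rfl
    have hn0' : ¬ (n = 0) := by omega
    simp only [L, U, hn0', if_false, if_true, max_le_iff] at this
    linarith
  have hτ : ∀ i, 0 < i → i < n → (A i ≤ τ i ∧ s i - k * B i + 1 ≤ τ i) ∧
      τ i ≤ B i ∧ τ i ≤ s i - k * A i := by
    intro i hi hin
    have := h1 i hin.le
    have h3 : ¬ (i = 0) := by omega
    have h4 : ¬ (i = n) := by omega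
    simpa only [L, U, h3, h4, if_false, max_le_iff, le_min_iff] using this
  refine ⟨τ, ⟨hτ0, ?_, ?_⟩, fun t ht => (h2 t ht).2.2, fun t ht => ⟨?_, ?_, ?_⟩⟩
  · intro i hi
    rcases Nat.eq_zero_or_pos i with h | h
    · subst h; rw [hA0, hB0, hτ0]; simp
    · rcases hi.eq_or_lt with h' | h'
      · rw [h', hτn, ← hAB]; simp
      · have := hτ i h h'; constructor <;> linarith
  · intro i hi; have := h2 i hi; constructor <;> linarith
  · simp [PLP_st, hs0, hτ0]
  · intro i hi
    simp only [Pi.sub_apply, Pi.add_apply]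
    rcases Nat.eq_zero_or_pos i with h | h
    · subst h; rw [hA0, hB0, hτ0, hs0]; simp [PLP_st]
    · rcases hi.eq_or_lt with h' | h'
      · rw [h', hτn, ← hAB]
        simp only [PLP_st, ht, if_true]
        constructor <;> linarith
      · have := hτ i h h'
        unfold PLP_st
        split_ifs <;> constructor <;> linarith
  · intro i hi
    have := h2 i hi
    simp only [Pi.sub_apply, Pi.add_apply]
    have h3 : 0 ≤ PLP_st t (i+1) - PLP_st t i ∧ PLP_st t (i+1) - PLP_st t i ≤ 1 := by
      unfold PLP_st
      split_ifs <;> first | omega | simp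
    constructor <;> linarith

/-- If no point of the polytope lies below `v`, but one lies below `v + e_t` for each `t`, then
`v` has all coordinates and total degree as in the socle. -/
lemma PLP_mem (n : ℕ) (hn : 0 < n) (A B b : ℕ → ℤ) (hA0 : A 0 = 0) (hB0 : B 0 = 0)
    (hmono : ∀ i j, i ≤ j → j ≤ n → A i ≤ B j) (hb : ∀ t < n, 0 ≤ b t)
    (k : ℕ) (s : ℕ → ℤ) (hs0 : s 0 = 0) (hsm : ∀ t < n, s t ≤ s (t+1))
    (hno : ¬ ∃ σ, PLP_PP n A B b k σ ∧ ∀ t < n, σ (t+1) - σ t ≤ s (t+1) - s t)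
    (hs : ∀ t < n, ∃ σ, PLP_PP n A B b k σ ∧
      ∀ r < n, σ (r+1) - σ r ≤ s (r+1) - s r + (if r = t then 1 else 0)) :
    s n + 1 ≤ k * A n := by
  have hk : (0:ℤ) ≤ k := by positivity
  let h : ℕ → ℤ := fun t => min (k * b t) (s (t+1) - s t)
  let H : ℕ → ℤ := fun i => ∑ t ∈ Finset.range i, h t
  have hH : ∀ t, H (t+1) - H t = h t := fun t => by simp [H, Finset.sum_range_succ]
  have hvb : ∀ t < n, s (t+1) - s t ≤ k * b t := by
    intro t ht
    obtain ⟨σ, h1, h2⟩ := hs t ht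
    by_contra hcon
    apply hno
    refine ⟨σ, h1, fun r hr => ?_⟩
    have h3 := h2 r hr
    have h4 := (h1.2.2 r hr).2
    by_cases hrt : r = t
    · subst hrt; linarith
    · simpa [hrt] using h3
  have hHs : H n = s n := by
    have e : ∀ t < n, H (t+1) - H t = s (t+1) - s t := by
      intro t ht; rw [hH]; exact min_eq_right (hvb t ht)
    have h1 := PLP_tel H s 0 n (by omega) (fun t _ ht => (e t ht).le)
    have h2 := PLP_tel s H 0 n (by omega) (fun t _ ht => (e t ht).ge)
    have : H 0 = 0 := by simp [H]
    linarith
  by_contra hcon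
  apply hno
  obtain ⟨σ, h1, h2⟩ := PLP_feas n (fun i => k * A i) (fun i => k * B i) (fun _ => 0) H
    (by
      intro t ht
      rw [hH]
      have := hb t ht
      have h0 : 0 ≤ k * b t := by positivity
      have := hsm t ht
      simp only [h, sub_self]
      exact le_min h0 (by linarith))
    (by
      intro i j hij hj
      by_cases hij' : i = 0 ∧ j = n
      · obtain ⟨rfl, rfl⟩ := hij'
        have : H 0 = 0 := by simp [H]
        rw [hHs, this, hB0]
        linarith
      · obtain ⟨t, ht, ht'⟩ : ∃ t < n, ∀ r, i ≤ r → r < j → r ≠ t := by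
          by_cases hi : i = 0
          · exact ⟨j, by omega, by omega⟩
          · exact ⟨0, hn, by omega⟩
        obtain ⟨σ, h1, h2⟩ := hs t ht
        have := PLP_tel σ H i j hij (fun r hr hrj => by
          rw [hH]
          have h3 := h2 r (by omega)
          simp only [ht' r hr hrj, if_false] at h3
          exact le_min (h1.2.2 r (by omega)).2 (by linarith))
        have h5 := (h1.2.1 j hj).1
        have h6 := (h1.2.1 i (by omega)).2
        linarith)
    (by
      intro i j hij hj
      have := mul_le_mul_of_nonneg_left (hmono i j hij hj) hk
      linarith)
  simp only [hH, h, le_min_iff] at h2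
  have h00 := h1 0 (by omega)
  simp only [hA0, hB0] at h00
  refine ⟨σ, ⟨by linarith, h1, fun t ht => ⟨by linarith [h2 t ht], by linarith [h2 t ht]⟩⟩,
    fun t ht => (h2 t ht).2.2⟩

section PLPtrans
open MvPolynomial

def PLP_pre {n : ℕ} (u : Fin n →₀ ℕ) (i : ℕ) : ℤ := ∑ j : Fin n, if j.val < i then (u j : ℤ) else 0

lemma PLP_pre_zero {n : ℕ} (u : Fin n →₀ ℕ) : PLP_pre u 0 = 0 := by simp [PLP_pre]

lemma PLP_pre_succ {n : ℕ} (u : Fin n →₀ ℕ) (t : ℕ) (ht : t < n) :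
    PLP_pre u (t+1) - PLP_pre u t = u ⟨t, ht⟩ := by
  unfold PLP_pre
  rw [← Finset.sum_sub_distrib, Finset.sum_eq_single ⟨t, ht⟩]
  · simp
  · intro j _ hj
    have : j.val ≠ t := fun h => hj (Fin.ext h)
    have h2 : j.val < t + 1 ↔ j.val < t := by omega
    simp [h2]
  · simp

lemma PLP_pre_add {n : ℕ} (u v : Fin n →₀ ℕ) : PLP_pre (u + v) = PLP_pre u + PLP_pre v := by
  funext i
  simp only [PLP_pre, Pi.add_apply, ← Finset.sum_add_distrib]
  refine Finset.sum_congr rfl fun j _ => ?_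
  split_ifs <;> simp

lemma PLP_pre_single {n : ℕ} (t : Fin n) : PLP_pre (Finsupp.single t 1) = PLP_st t.val := by
  funext i
  unfold PLP_pre PLP_st
  rw [Finset.sum_eq_single t]
  · simp
  · intro j _ hj
    simp [Finsupp.single_apply, hj.symm]
  · simp

lemma PLP_pre_surj {n : ℕ} (σ : ℕ → ℤ) (h0 : σ 0 = 0) (h : ∀ t < n, 0 ≤ σ (t+1) - σ t) :
    ∃ u : Fin n →₀ ℕ, (∀ i ≤ n, PLP_pre u i = σ i) ∧
      ∀ t (ht : t < n), (u ⟨t, ht⟩ : ℤ) = σ (t+1) - σ t := by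
  let u : Fin n →₀ ℕ := Finsupp.equivFunOnFinite.symm
    (fun t : Fin n => (σ (t.val+1) - σ t.val).toNat)
  have hu : ∀ t (ht : t < n), (u ⟨t, ht⟩ : ℤ) = σ (t+1) - σ t := by
    intro t ht
    simp only [u, Finsupp.coe_equivFunOnFinite_symm]
    exact Int.toNat_of_nonneg (h t ht)
  refine ⟨u, ?_, hu⟩
  intro i
  induction i with
  | zero => intro _; rw [PLP_pre_zero, h0]
  | succ i ih =>
    intro hi
    have h1 := PLP_pre_succ u i (by omega)
    rw [hu, ih (by omega)] at h1
    linarith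

lemma PLP_PP_congr {n : ℕ} {A B b : ℕ → ℤ} {k : ℤ} {σ τ : ℕ → ℤ} (h : ∀ i ≤ n, σ i = τ i)
    (hσ : PLP_PP n A B b k σ) : PLP_PP n A B b k τ := by
  obtain ⟨h0, h1, h2⟩ := hσ
  refine ⟨by rw [← h 0 (by omega), h0], fun i hi => by rw [← h i hi]; exact h1 i hi,
    fun t ht => by rw [← h t ht.le, ← h (t+1) ht]; exact h2 t ht⟩

lemma PLP_PP_add {n : ℕ} {A B b : ℕ → ℤ} {k l : ℤ} {σ τ : ℕ → ℤ}
    (hσ : PLP_PP n A B b k σ) (hτ : PLP_PP n A B b l τ) : PLP_PP n A B b (k+l) (σ+τ) := by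
  obtain ⟨h0, h1, h2⟩ := hσ
  obtain ⟨g0, g1, g2⟩ := hτ
  refine ⟨by simp [h0, g0], fun i hi => ?_, fun t ht => ?_⟩
  · have := h1 i hi; have := g1 i hi
    simp only [Pi.add_apply, add_mul]; constructor <;> linarith
  · have := h2 t ht; have := g2 t ht
    simp only [Pi.add_apply, add_mul]; constructor <;> linarith

lemma PLP_pre_inj {n : ℕ} (u v : Fin n →₀ ℕ) (h : ∀ i ≤ n, PLP_pre u i = PLP_pre v i) :
    u = v := by
  ext ⟨t, ht⟩
  have h1 := PLP_pre_succ u t ht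
  have h2 := PLP_pre_succ v t ht
  rw [h t ht.le, h (t+1) ht] at h1
  omega

/-- exponent vectors of the generators of the `k`-th power -/
def PLP_S (n : ℕ) (A B b : ℕ → ℤ) (k : ℕ) : Set (Fin n →₀ ℕ) :=
  {u | PLP_PP n A B b k (PLP_pre u)}

lemma PLP_S_decomp {n : ℕ} {A B b : ℕ → ℤ} (hA0 : A 0 = 0) (hB0 : B 0 = 0) (k : ℕ)
    (w : Fin n →₀ ℕ) (hw : w ∈ PLP_S n A B b (k+1)) :
    ∃ u ∈ PLP_S n A B b 1, ∃ v ∈ PLP_S n A B b k, v + u = w := by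
  obtain ⟨τ, h1, h2⟩ := PLP_decomp n A B b hA0 hB0 k (PLP_pre w)
    (by simpa [PLP_S] using hw)
  obtain ⟨u, hu, -⟩ := PLP_pre_surj (n := n) τ h1.1 (fun t ht => (h1.2.2 t ht).1)
  obtain ⟨v, hv, -⟩ := PLP_pre_surj (n := n) _ h2.1 (fun t ht => (h2.2.2 t ht).1)
  refine ⟨u, ?_, v, PLP_PP_congr (fun i hi => (hv i hi).symm) h2, ?_⟩
  · have := PLP_PP_congr (fun i hi => (hu i hi).symm) h1
    simpa [PLP_S] using this
  · apply PLP_pre_inj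
    intro i hi
    rw [PLP_pre_add, Pi.add_apply, hu i hi, hv i hi]
    simp

lemma PLP_S_soc {n : ℕ} {A B b : ℕ → ℤ} (hA0 : A 0 = 0) (hB0 : B 0 = 0) (hAB : A n = B n)
    (hn : 2 ≤ n) (k : ℕ) (hk : n - 1 ≤ k) (v : Fin n →₀ ℕ)
    (hv : ∀ t, v + Finsupp.single t 1 ∈ PLP_S n A B b (k+1)) :
    ∃ u ∈ PLP_S n A B b 1, ∃ w, u + w = v ∧ ∀ t, w + Finsupp.single t 1 ∈ PLP_S n A B b k := by
  have hsm : ∀ t < n, PLP_pre v t ≤ PLP_pre v (t+1) := by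
    intro t ht
    have := PLP_pre_succ v t ht
    omega
  obtain ⟨τ, h1, h2, h3⟩ := PLP_soc n A B b hA0 hB0 hAB hn k hk (PLP_pre v) (PLP_pre_zero v) hsm
    (by
      intro t ht
      have := hv ⟨t, ht⟩
      simpa [PLP_S, PLP_pre_add, PLP_pre_single] using this)
  obtain ⟨u, hu, -⟩ := PLP_pre_surj (n := n) τ h1.1 (fun t ht => (h1.2.2 t ht).1)
  obtain ⟨w, hw, -⟩ := PLP_pre_surj (n := n) (PLP_pre v - τ) (by simp [h1.1, PLP_pre_zero])
    (fun t ht => by have := h2 t ht; simp only [Pi.sub_apply]; linarith)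
  refine ⟨u, ?_, w, ?_, ?_⟩
  · have := PLP_PP_congr (fun i hi => (hu i hi).symm) h1
    simpa [PLP_S] using this
  · apply PLP_pre_inj
    intro i hi
    rw [PLP_pre_add, Pi.add_apply, hu i hi, hw i hi]
    simp
  · intro t
    refine PLP_PP_congr (fun i hi => ?_) (h3 t.val t.isLt)
    rw [PLP_pre_add, PLP_pre_single, Pi.add_apply, Pi.add_apply, hw i hi]

lemma PLP_S_mem {n : ℕ} {A B b : ℕ → ℤ} (hn : 0 < n) (hA0 : A 0 = 0) (hB0 : B 0 = 0)
    (hmono : ∀ i j, i ≤ j → j ≤ n → A i ≤ B j) (hb : ∀ t < n, 0 ≤ b t)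
    (k : ℕ) (v : Fin n →₀ ℕ)
    (hno : ¬ ∃ w ∈ PLP_S n A B b k, w ≤ v)
    (hs : ∀ t, ∃ w ∈ PLP_S n A B b k, w ≤ v + Finsupp.single t 1) (t : Fin n) :
    v + Finsupp.single t 1 ∈ PLP_S n A B b k := by
  have hsm : ∀ t < n, PLP_pre v t ≤ PLP_pre v (t+1) := by
    intro t ht
    have := PLP_pre_succ v t ht
    omega
  have key := PLP_mem n hn A B b hA0 hB0 hmono hb k (PLP_pre v) (PLP_pre_zero v) hsm
    (by
      rintro ⟨σ, h1, h2⟩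
      obtain ⟨u, hu, hu'⟩ := PLP_pre_surj (n := n) σ h1.1 (fun t ht => (h1.2.2 t ht).1)
      refine hno ⟨u, PLP_PP_congr (fun i hi => (hu i hi).symm) h1, ?_⟩
      rintro ⟨r, hr⟩
      have e1 := hu' r hr
      have e2 := h2 r hr
      rw [PLP_pre_succ v r hr, ← e1] at e2
      exact_mod_cast e2)
    (by
      intro t ht
      obtain ⟨w, hw, hle⟩ := hs ⟨t, ht⟩
      refine ⟨PLP_pre w, hw, fun r hr => ?_⟩
      have := hle ⟨r, hr⟩
      rw [PLP_pre_succ w r hr, PLP_pre_succ v r hr]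
      simp only [Finsupp.add_apply, Finsupp.single_apply, Fin.mk.injEq, eq_comm (a := t)] at this
      exact_mod_cast this)
  obtain ⟨w, hw, hle⟩ := hs t
  obtain ⟨x, hx⟩ := exists_add_of_le hle
  have h1 := (hw.2.1 n le_rfl).1
  have h2 : PLP_pre (v + Finsupp.single t 1) n = PLP_pre w n + PLP_pre x n := by
    rw [hx, PLP_pre_add]; rfl
  rw [PLP_pre_add, PLP_pre_single, Pi.add_apply] at h2
  simp only [PLP_st, t.isLt, if_true] at h2
  have h3 : PLP_pre x n ≤ 0 := by linarith
  have h4 : x = 0 := by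
    have e : PLP_pre x n = ∑ j, (x j : ℤ) := by
      unfold PLP_pre
      exact Finset.sum_congr rfl fun j _ => by simp
    rw [e] at h3
    have h5 := le_antisymm h3 (Finset.sum_nonneg fun j _ => by positivity)
    rw [Finset.sum_eq_zero_iff_of_nonneg (fun j _ => by positivity)] at h5
    ext j
    simpa using h5 j (Finset.mem_univ j)
  rw [hx, h4, add_zero]
  exact hw

variable {K : Type*} [Field K]

lemma PLP_pow {n : ℕ} {A B b : ℕ → ℤ} (hA0 : A 0 = 0) (hB0 : B 0 = 0) (k : ℕ) :
    (Ideal.span ((fun s => monomial s (1 : K)) '' PLP_S n A B b 1)) ^ k =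
      Ideal.span ((fun s => monomial s (1 : K)) '' PLP_S n A B b k) := by
  induction k with
  | zero =>
    rw [pow_zero, Ideal.one_eq_top, eq_comm, Ideal.eq_top_iff_one]
    apply Ideal.subset_span
    refine ⟨0, ?_, by simp⟩
    refine ⟨PLP_pre_zero _, fun i hi => ?_, fun t ht => ?_⟩ <;> simp [PLP_pre]
  | succ k ih =>
    rw [pow_succ, ih, Ideal.span_mul_span']
    congr 1
    ext f
    rw [Set.mem_mul]
    constructor
    · rintro ⟨_, ⟨v, hv, rfl⟩, _, ⟨u, hu, rfl⟩, rfl⟩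
      refine ⟨v + u, ?_, by simp [monomial_mul]⟩
      have := PLP_PP_add hv hu
      rw [← PLP_pre_add] at this
      simpa [PLP_S] using this
    · rintro ⟨w, hw, rfl⟩
      obtain ⟨u, hu, v, hv, rfl⟩ := PLP_S_decomp hA0 hB0 k w hw
      exact ⟨_, ⟨v, hv, rfl⟩, _, ⟨u, hu, rfl⟩, by simp [monomial_mul]⟩

lemma PLP_main {n : ℕ} {A B b : ℕ → ℤ} (hA0 : A 0 = 0) (hB0 : B 0 = 0) (hAB : A n = B n)
    (hmono : ∀ i j, i ≤ j → j ≤ n → A i ≤ B j) (hb : ∀ t < n, 0 ≤ b t)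
    (hn : 2 ≤ n) (k : ℕ) (hk : n - 1 ≤ k)
    (I : Ideal (MvPolynomial (Fin n) K))
    (hI : I = Ideal.span ((fun s => monomial s (1 : K)) '' PLP_S n A B b 1))
    (mI : Ideal (MvPolynomial (Fin n) K)) (hmI : mI = Ideal.span (Set.range X)) :
    (I ^ (k + 1)).colon mI = I ^ (k + 1) ⊔ I * ((I ^ k).colon mI) := by
  have hpow : ∀ k, I ^ k = Ideal.span ((fun s => monomial s (1 : K)) '' PLP_S n A B b k) := by
    intro k; rw [hI]; exact PLP_pow hA0 hB0 k
  have hmono_mem : ∀ k (v : Fin n →₀ ℕ) (c : K), (∃ w ∈ PLP_S n A B b k, w ≤ v) →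
      monomial v c ∈ I ^ k := by
    intro k v c h
    rw [hpow, mem_ideal_span_monomial_image]
    intro xi hxi
    have := support_monomial_subset hxi
    rw [Finset.mem_singleton] at this
    rwa [this]
  apply le_antisymm
  · intro f hf
    rw [Submodule.mem_colon] at hf
    rw [f.as_sum]
    refine Ideal.sum_mem _ fun v hv => ?_
    have hvt : ∀ t, ∃ w ∈ PLP_S n A B b (k+1), w ≤ v + Finsupp.single t 1 := by
      intro t
      have h1 := hf (X t) (by rw [hmI]; exact Ideal.subset_span ⟨t, rfl⟩)
      rw [smul_eq_mul, hpow, mem_ideal_span_monomial_image] at h1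
      apply h1
      rw [mem_support_iff, coeff_mul_X]
      exact mem_support_iff.mp hv
    by_cases hno : ∃ w ∈ PLP_S n A B b (k+1), w ≤ v
    · exact Ideal.mem_sup_left (hmono_mem _ _ _ hno)
    · have hsoc := PLP_S_mem (by omega) hA0 hB0 hmono hb (k+1) v hno hvt
      obtain ⟨u, hu, w, rfl, hw⟩ := PLP_S_soc hA0 hB0 hAB hn k hk v hsoc
      apply Ideal.mem_sup_right
      have : monomial (u + w) (coeff (u + w) f) =
          monomial u (1:K) * monomial w (coeff (u + w) f) := by simp [monomial_mul]
      rw [this]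
      refine Ideal.mul_mem_mul ?_ ?_
      · rw [hI]; exact Ideal.subset_span ⟨u, hu, rfl⟩
      · rw [Submodule.mem_colon]
        intro g hg
        generalize coeff (u + w) f = c
        rw [hmI] at hg
        rw [smul_eq_mul, mul_comm]
        have hle : Ideal.span (Set.range X) ≤ Submodule.comap
            (LinearMap.mulRight (MvPolynomial (Fin n) K) (monomial w c)) (I ^ k) := by
          rw [Ideal.span_le]
          rintro _ ⟨t, rfl⟩
          simp only [SetLike.mem_coe, Submodule.mem_comap, LinearMap.mulRight_apply]
          have : X t * monomial w c = monomial (w + Finsupp.single t 1) c := by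
            rw [X, monomial_mul, one_mul, add_comm]
          rw [this]
          exact hmono_mem _ _ _ ⟨_, hw t, le_rfl⟩
        exact hle hg
  · refine sup_le ?_ ?_
    · intro f hf
      rw [Submodule.mem_colon]
      intro g _
      rw [smul_eq_mul]
      exact Ideal.mul_mem_right _ _ hf
    · rw [Ideal.mul_le]
      intro r hr s hs
      rw [Submodule.mem_colon] at hs ⊢
      intro g hg
      have := Ideal.mul_mem_mul hr (hs g hg)
      rw [← pow_succ'] at this
      simpa [mul_assoc] using this

end PLPtrans

open MvPolynomial

/-- For a basic PLP-polymatroidal ideal `I` of type `(0, b | α, β)` in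
`S = K[x₁,…,xₙ]`, one has `(I^{k+1} : 𝔪) = I^{k+1} + I·(I^k : 𝔪)` for every `k ≥ n - 1`;
that is, `Soc*(I)` (and hence `Soc(I)`) is generated in degrees `< n`. -/
theorem socle_of_PLP_generated_in_small_degrees
    {K : Type*} [Field K] {n : ℕ} (hn : 0 < n) (d : ℕ) (hd : 1 ≤ d)
    (b α β : Fin n → ℕ)
    (hαmono : Monotone α) (hβmono : Monotone β)
    (hαlast : α ⟨n - 1, by omega⟩ = d) (hβlast : β ⟨n - 1, by omega⟩ = d)
    (hαβ : ∀ i, α i ≤ β i)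
    (hα1 : α ⟨0, hn⟩ = 0) (hβ1 : β ⟨0, hn⟩ = b ⟨0, hn⟩)
    (I : Ideal (MvPolynomial (Fin n) K))
    (hI : I = Ideal.span {f | ∃ u : Fin n → ℕ, (∀ i, u i ≤ b i) ∧
        (∀ i, α i ≤ ∑ j ∈ Finset.Iic i, u j ∧ ∑ j ∈ Finset.Iic i, u j ≤ β i) ∧
        f = ∏ i, X i ^ u i})
    (mI : Ideal (MvPolynomial (Fin n) K)) (hmI : mI = Ideal.span (Set.range X)) :
    ∀ k : ℕ, n - 1 ≤ k →
      (I ^ (k + 1)).colon mI = I ^ (k + 1) ⊔ I * ((I ^ k).colon mI) := by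
  intro k hk
  have hn2 : 2 ≤ n := by
    by_contra hcon
    obtain rfl : n = 1 := by omega
    have : α ⟨0, hn⟩ = d := hαlast
    omega
  let A : ℕ → ℤ := fun i => if h : 1 ≤ i ∧ i ≤ n then (α ⟨i - 1, by omega⟩ : ℤ) else 0
  let B : ℕ → ℤ := fun i => if h : 1 ≤ i ∧ i ≤ n then (β ⟨i - 1, by omega⟩ : ℤ) else 0
  let b' : ℕ → ℤ := fun t => if h : t < n then (b ⟨t, h⟩ : ℤ) else 0
  have hAs : ∀ i (hi : i < n), A (i+1) = α ⟨i, hi⟩ := by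
    intro i hi
    have : i + 1 ≤ n := hi
    simp [A, this]
  have hBs : ∀ i (hi : i < n), B (i+1) = β ⟨i, hi⟩ := by
    intro i hi
    have : i + 1 ≤ n := hi
    simp [B, this]
  have hbs : ∀ i (hi : i < n), b' i = b ⟨i, hi⟩ := by
    intro i hi
    simp [b', hi]
  have hA0 : A 0 = 0 := by simp [A]
  have hB0 : B 0 = 0 := by simp [B]
  have hpre : ∀ (u : Fin n →₀ ℕ) (i : Fin n),
      PLP_pre u (i.val + 1) = ((∑ j ∈ Finset.Iic i, u j : ℕ) : ℤ) := by
    intro u i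
    unfold PLP_pre
    rw [← Finset.sum_filter]
    push_cast
    refine Finset.sum_congr ?_ fun _ _ => rfl
    ext j
    rw [Finset.mem_filter, Finset.mem_Iic, Fin.le_def]
    exact ⟨fun h => Nat.lt_succ_iff.mp h.2, fun h => ⟨Finset.mem_univ _, Nat.lt_succ_iff.mpr h⟩⟩
  refine PLP_main (A := A) (B := B) (b := b') hA0 hB0 ?_ ?_ ?_ hn2 k hk I ?_ mI hmI
  · have h1 := hAs (n-1) (by omega)
    have h2 := hBs (n-1) (by omega)
    rw [Nat.sub_add_cancel hn] at h1 h2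
    rw [h1, h2, hαlast, hβlast]
  · intro i j hij hj
    rcases i with _ | i
    · rw [hA0]
      rcases j with _ | j
      · rw [hB0]
      · rw [hBs j (by omega)]; positivity
    · rcases j with _ | j
      · omega
      · rw [hAs i (by omega), hBs j (by omega)]
        exact_mod_cast (hαmono (Fin.mk_le_mk.mpr (by omega))).trans (hαβ _)
  · intro t ht
    rw [hbs t ht]; positivity
  · rw [hI]
    congr 1
    have hmon : ∀ u : Fin n →₀ ℕ, monomial u (1:K) = ∏ i, X i ^ u i := by
      intro u
      rw [monomial_eq, C_1, one_mul, Finsupp.prod_fintype _ _ (by simp)]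
    have hS : ∀ u : Fin n →₀ ℕ, u ∈ PLP_S n A B b' 1 ↔ (∀ i, u i ≤ b i) ∧
        (∀ i, α i ≤ ∑ j ∈ Finset.Iic i, u j ∧ ∑ j ∈ Finset.Iic i, u j ≤ β i) := by
      intro u
      constructor
      · rintro ⟨-, h1, h2⟩
        constructor
        · intro i
          have := (h2 i.val i.isLt).2
          rw [PLP_pre_succ u i.val i.isLt, hbs i.val i.isLt] at this
          simpa using this
        · intro i
          have := h1 (i.val+1) i.isLt
          rw [hpre, hAs i.val i.isLt, hBs i.val i.isLt] at this
          simp only [Nat.cast_one, one_mul] at this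
          exact_mod_cast this
      · rintro ⟨h1, h2⟩
        refine ⟨PLP_pre_zero u, ?_, ?_⟩
        · intro i hi
          rcases i with _ | i
          · rw [hA0, hB0, PLP_pre_zero]; simp
          · have e := hpre u ⟨i, hi⟩
            simp only at e
            rw [e, hAs i hi, hBs i hi]
            simp only [Nat.cast_one, one_mul]
            exact_mod_cast h2 ⟨i, hi⟩
        · intro t ht
          rw [PLP_pre_succ u t ht, hbs t ht]
          simp only [Nat.cast_one, one_mul]
          exact ⟨by positivity, by exact_mod_cast h1 ⟨t, ht⟩⟩
    refine Set.ext fun f => ?_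
    constructor
    · rintro ⟨u, h1, h2, rfl⟩
      refine ⟨Finsupp.equivFunOnFinite.symm u, (hS _).2 ⟨?_, ?_⟩, ?_⟩
      · simpa using h1
      · simpa using h2
      · simp only [hmon]; simp
    · rintro ⟨u, hu, rfl⟩
      obtain ⟨h1, h2⟩ := (hS u).1 hu
      exact ⟨u, h1, h2, hmon u⟩
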